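/- Let n ≥ 1 and let p_n : (ℂ*)^4 → (ℂ*)^4 be the map p_n(w, x, y, z) = (w^n, w/x, w·y, w·z). Then U_n = p_n(U) is an irreducible subset of ℂ^4 equipped with the Zariski topology, where U = {(w, x, y, z) ∈ (ℂ*)^4 : w + y = 1 and x + z = 1}. -/

import Mathlib

noncomputable section

/-- The Zariski topology on `ℂ^4` (points given as functions `Fin 4 → ℂ`): the
closed sets are the common zero loci of families of polynomials in four
variables; equivalently, the topology is generated by the basic open sets
`{x | p(x) ≠ 0}` for polynomials `p`. -/
def zariskiC4 : TopologicalSpace (Fin 4 → ℂ) :=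
  TopologicalSpace.generateFrom
    {s | ∃ p : MvPolynomial (Fin 4) ℂ, s = {x | MvPolynomial.eval x p ≠ 0}}

/-- The surface `U = {(w,x,y,z) ∈ (ℂ*)^4 : w + y = 1, x + z = 1} ⊆ ℂ^4`, with
points written as functions `Fin 4 → ℂ`. -/
def U : Set (Fin 4 → ℂ) :=
  {x | (∀ i, x i ≠ 0) ∧ x 0 + x 2 = 1 ∧ x 1 + x 3 = 1}

/-- The map `p_n(w, x, y, z) = (wⁿ, w/x, w·y, w·z)` on points of `ℂ^4`. -/
def pmap (n : ℕ) (x : Fin 4 → ℂ) : Fin 4 → ℂ :=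
  ![x 0 ^ n, x 0 / x 1, x 0 * x 2, x 0 * x 3]

/-!
In the coordinates `s = w * x`, `t = 1 / x` on `U`, every coordinate of `p_n` becomes a polynomial,
because the only denominator `x` is now `1 / t`. Moreover `U` is the part of the `(s, t)`-plane
where the polynomial `s * t * (1 - s * t) * (t - 1)` does not vanish. Hence `U_n` is the image,
under a polynomial map, of a nonempty open subset of the irreducible affine plane.
-/

open MvPolynomial TopologicalSpace

section AffineSpace

variable {σ τ R : Type*}

/-- The locus in affine space `σ → R` where a polynomial does not vanish: a basic open set of the
Zariski topology. -/
def nonvanishingLocus [CommSemiring R] (p : MvPolynomial σ R) : Set (σ → R) :=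
  {x | eval x p ≠ 0}

variable (σ R) in
/-- The Zariski topology on affine space `σ → R`, of which `zariskiC4` is the case `σ = Fin 4`,
`R = ℂ`. It is only a local instance, since it would conflict with the product topology when `R`
carries a topology. -/
@[reducible]
def zariskiTopology [CommSemiring R] : TopologicalSpace (σ → R) :=
  generateFrom (Set.range (nonvanishingLocus : MvPolynomial σ R → Set (σ → R)))

attribute [local instance] zariskiTopology

theorem zariskiC4_eq_zariskiTopology : zariskiC4 = zariskiTopology (Fin 4) ℂ := by
  simp only [zariskiC4, zariskiTopology, nonvanishingLocus, Set.range, eq_comm]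

section CommSemiring

variable [CommSemiring R]

@[simp]
theorem mem_nonvanishingLocus {p : MvPolynomial σ R} {x : σ → R} :
    x ∈ nonvanishingLocus p ↔ eval x p ≠ 0 :=
  Iff.rfl

theorem nonvanishingLocus_one [Nontrivial R] :
    nonvanishingLocus (1 : MvPolynomial σ R) = Set.univ := by
  ext x
  simp

theorem nonvanishingLocus_mul [NoZeroDivisors R] (p q : MvPolynomial σ R) :
    nonvanishingLocus (p * q) = nonvanishingLocus p ∩ nonvanishingLocus q := by
  ext x
  simp

theorem isOpen_nonvanishingLocus (p : MvPolynomial σ R) : IsOpen (nonvanishingLocus p) :=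
  isOpen_generateFrom_of_mem ⟨p, rfl⟩

theorem isTopologicalBasis_range_nonvanishingLocus [Nontrivial R] [NoZeroDivisors R] :
    IsTopologicalBasis (Set.range (nonvanishingLocus : MvPolynomial σ R → Set (σ → R))) := by
  refine isTopologicalBasis_of_subbasis_of_finiteInter rfl ⟨⟨1, nonvanishingLocus_one⟩, ?_⟩
  rintro _ ⟨p, rfl⟩ _ ⟨q, rfl⟩
  exact ⟨p * q, nonvanishingLocus_mul p q⟩

/-- The polynomial map of affine spaces whose `i`-th coordinate is evaluation of `f i`. -/
def polynomialMap (f : τ → MvPolynomial σ R) (x : σ → R) : τ → R :=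
  fun i => eval x (f i)

theorem eval_polynomialMap (f : τ → MvPolynomial σ R) (p : MvPolynomial τ R) (x : σ → R) :
    eval (polynomialMap f x) p = eval x (bind₁ f p) :=
  (eval₂Hom_bind₁ (RingHom.id R) x f p).symm

theorem preimage_polynomialMap_nonvanishingLocus (f : τ → MvPolynomial σ R)
    (p : MvPolynomial τ R) :
    polynomialMap f ⁻¹' nonvanishingLocus p = nonvanishingLocus (bind₁ f p) := by
  ext x
  simp [eval_polynomialMap]

theorem continuous_polynomialMap (f : τ → MvPolynomial σ R) : Continuous (polynomialMap f) := by
  refine continuous_generateFrom_iff.2 ?_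
  rintro _ ⟨p, rfl⟩
  rw [preimage_polynomialMap_nonvanishingLocus]
  exact isOpen_nonvanishingLocus _

end CommSemiring

variable [CommRing R] [IsDomain R] [Infinite R]

theorem nonvanishingLocus_nonempty_iff {p : MvPolynomial σ R} :
    (nonvanishingLocus p).Nonempty ↔ p ≠ 0 := by
  simp [Set.Nonempty, MvPolynomial.funext_iff]

theorem preirreducibleSpace_zariskiTopology : PreirreducibleSpace (σ → R) := by
  refine .of_forall_nonempty_inter fun A B hA hB hA_nonempty hB_nonempty => ?_
  have basis := isTopologicalBasis_range_nonvanishingLocus (σ := σ) (R := R)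
  obtain ⟨_, ⟨p, rfl⟩, hp, hpA⟩ := basis.exists_nonempty_subset hA_nonempty hA
  obtain ⟨_, ⟨q, rfl⟩, hq, hqB⟩ := basis.exists_nonempty_subset hB_nonempty hB
  rw [nonvanishingLocus_nonempty_iff] at hp hq
  have hpq : (nonvanishingLocus (p * q)).Nonempty :=
    nonvanishingLocus_nonempty_iff.2 (mul_ne_zero hp hq)
  rw [nonvanishingLocus_mul] at hpq
  exact hpq.mono (Set.inter_subset_inter hpA hqB)

theorem isIrreducible_nonvanishingLocus {p : MvPolynomial σ R} (hp : p ≠ 0) :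
    IsIrreducible (nonvanishingLocus p) :=
  ⟨nonvanishingLocus_nonempty_iff.2 hp,
    preirreducibleSpace_zariskiTopology.isPreirreducible_univ.open_subset
      (isOpen_nonvanishingLocus p) (Set.subset_univ _)⟩

theorem isIrreducible_image_polynomialMap (f : τ → MvPolynomial σ R) {p : MvPolynomial σ R}
    (hp : p ≠ 0) : IsIrreducible (polynomialMap f '' nonvanishingLocus p) :=
  (isIrreducible_nonvanishingLocus hp).image _ (continuous_polynomialMap f).continuousOn

end AffineSpace

/-- The point of `U` with coordinates `s = v 0 = w * x` and `t = v 1 = 1 / x`, meaningful only for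
`v 1 ≠ 0`. -/
def parametrizationU (v : Fin 2 → ℂ) : Fin 4 → ℂ :=
  ![v 0 * v 1, (v 1)⁻¹, 1 - v 0 * v 1, 1 - (v 1)⁻¹]

/-- The polynomial `s * t * (1 - s * t) * (t - 1)` in the coordinates `s`, `t` of
`parametrizationU`; its nonvanishing locus is the domain of that parametrization. -/
def boundaryPolynomial : MvPolynomial (Fin 2) ℂ :=
  X 0 * X 1 * (1 - X 0 * X 1) * (X 1 - 1)

/-- The coordinates of `p_n` as polynomials in the coordinates `s`, `t` of `parametrizationU`. -/
def pmapPolynomial (n : ℕ) : Fin 4 → MvPolynomial (Fin 2) ℂ :=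
  ![(X 0 * X 1) ^ n, X 0 * X 1 ^ 2, X 0 * X 1 * (1 - X 0 * X 1), X 0 * X 1 - X 0]

theorem eval_boundaryPolynomial (v : Fin 2 → ℂ) :
    eval v boundaryPolynomial = v 0 * v 1 * (1 - v 0 * v 1) * (v 1 - 1) := by
  simp [boundaryPolynomial]

theorem boundaryPolynomial_ne_zero : boundaryPolynomial ≠ 0 := by
  refine nonvanishingLocus_nonempty_iff.1 ⟨![1, 2], ?_⟩
  norm_num [eval_boundaryPolynomial]

theorem parametrizationU_mem_U_iff {v : Fin 2 → ℂ} :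
    parametrizationU v ∈ U ↔ v ∈ nonvanishingLocus boundaryPolynomial := by
  have one_sub_inv : 1 - (v 1)⁻¹ = 0 ↔ v 1 - 1 = 0 := by
    rw [sub_eq_zero, sub_eq_zero, eq_comm, inv_eq_one]
  simp [U, parametrizationU, eval_boundaryPolynomial, Fin.forall_fin_succ, one_sub_inv,
    and_assoc, and_left_comm]

theorem exists_parametrizationU_eq {x : Fin 4 → ℂ} (hx : x ∈ U) :
    ∃ v, parametrizationU v = x := by
  obtain ⟨hx_ne, hwy, hxz⟩ := hx
  have hy : 1 - x 0 = x 2 := sub_eq_of_eq_add' hwy.symm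
  have hz : 1 - x 1 = x 3 := sub_eq_of_eq_add' hxz.symm
  refine ⟨![x 0 * x 1, (x 1)⁻¹], funext fun i => ?_⟩
  fin_cases i <;> simp [parametrizationU, hx_ne 1, hy, hz]

theorem image_parametrizationU :
    parametrizationU '' nonvanishingLocus boundaryPolynomial = U := by
  refine Set.Subset.antisymm ?_ fun x hx => ?_
  · rintro _ ⟨v, hv, rfl⟩
    exact parametrizationU_mem_U_iff.2 hv
  · obtain ⟨v, rfl⟩ := exists_parametrizationU_eq hx
    exact ⟨v, parametrizationU_mem_U_iff.1 hx, rfl⟩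

theorem pmap_parametrizationU (n : ℕ) {v : Fin 2 → ℂ} (hv : v 1 ≠ 0) :
    pmap n (parametrizationU v) = polynomialMap (pmapPolynomial n) v := by
  funext i
  fin_cases i <;>
    simp [pmap, parametrizationU, polynomialMap, pmapPolynomial, pow_two, mul_assoc, mul_sub, hv]

theorem image_pmap_U (n : ℕ) :
    pmap n '' U =
      polynomialMap (pmapPolynomial n) '' nonvanishingLocus boundaryPolynomial := by
  rw [← image_parametrizationU, Set.image_image]
  refine Set.image_congr fun v hv => pmap_parametrizationU n ?_
  intro hv_zero
  simp [eval_boundaryPolynomial, hv_zero] at hv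

/-- For `n ≥ 1`, the image `U_n = p_n(U)` of
`U = {(w,x,y,z) ∈ (ℂ*)^4 : w + y = 1, x + z = 1}` under
`p_n(w,x,y,z) = (wⁿ, w/x, w·y, w·z)` is an irreducible subset of `ℂ^4` equipped
with the Zariski topology. -/
theorem Un_irreducible (n : ℕ) (hn : 1 ≤ n) :
    @IsIrreducible (Fin 4 → ℂ) zariskiC4 (pmap n '' U) := by
  rw [zariskiC4_eq_zariskiTopology, image_pmap_U]
  exact isIrreducible_image_polynomialMap (pmapPolynomial n) boundaryPolynomial_ne_zero
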